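/- Generalized Leibniz formula, second form (Theorem 1.1, formula (Rfg2)): Let n ≥ 1 and let 𝐩 ∈ ℝ[x₁,…,xₙ]. Let W(𝐩) be the linear span of all partial derivatives ∂^α𝐩 for multi-indices α ∈ ℕⁿ (including α = 0), let ρ = dim W(𝐩), and let 𝐩₁,…,𝐩_ρ be a basis of W(𝐩) orthonormal with respect to the Fischer inner product. Then for all smooth functions f, g : ℝⁿ → ℝ one has 𝐩(∂)(f·g) = Σ_{i=1}^{ρ} Σ_{j=1}^{ρ} (𝐩, 𝐩ᵢ·𝐩ⱼ)_F · (𝐩ᵢ(∂)f)·(𝐩ⱼ(∂)g) pointwise on ℝⁿ. -/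

import Mathlib

noncomputable section

open MvPolynomial

/-- Partial derivative of a function on `ℝⁿ` in the `i`-th coordinate direction. -/
def pderivFun {n : ℕ} (i : Fin n) (f : (Fin n → ℝ) → ℝ) : (Fin n → ℝ) → ℝ :=
  fun x => fderiv ℝ f x (Pi.single i 1)

/-- `∂^m`, the iterated partial derivative attached to the multi-index `m`. -/
def multiDerivFun {n : ℕ} (m : Fin n →₀ ℕ) (f : (Fin n → ℝ) → ℝ) : (Fin n → ℝ) → ℝ :=
  List.foldr (fun i g => (pderivFun i)^[m i] g) f (List.finRange n)

/-- `p(∂)`, the constant-coefficient differential operator attached to the polynomial `p`. -/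
def polDeriv {n : ℕ} (p : MvPolynomial (Fin n) ℝ) (f : (Fin n → ℝ) → ℝ) : (Fin n → ℝ) → ℝ :=
  fun x => ∑ m ∈ p.support, p.coeff m * multiDerivFun m f x

/-- `∂^m` acting on polynomials. -/
def polyMultiDeriv {n : ℕ} (m : Fin n →₀ ℕ) (p : MvPolynomial (Fin n) ℝ) :
    MvPolynomial (Fin n) ℝ :=
  List.foldr (fun i q => (fun r => MvPolynomial.pderiv i r)^[m i] q) p (List.finRange n)

/-- `q(∂)p`, as a polynomial. -/
def polyApply {n : ℕ} (q p : MvPolynomial (Fin n) ℝ) : MvPolynomial (Fin n) ℝ :=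
  ∑ m ∈ q.support, q.coeff m • polyMultiDeriv m p

/-- The Fischer inner product `(p,q)_F = (p(∂)q)(0)`. -/
def fischer {n : ℕ} (p q : MvPolynomial (Fin n) ℝ) : ℝ :=
  polDeriv p (fun x => MvPolynomial.eval x q) 0

/-- `W(p)`, the linear span of all partial derivatives `∂^α p` (including `p` itself). -/
def Wspace {n : ℕ} (p : MvPolynomial (Fin n) ℝ) : Submodule ℝ (MvPolynomial (Fin n) ℝ) :=
  Submodule.span ℝ (Set.range fun m : Fin n →₀ ℕ => polyMultiDeriv m p)

lemma foldr_shift {n : ℕ} {A : Type*} (D : Fin n → A → A) (S : A → Prop)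
    (hS : ∀ i a, S a → S (D i a)) (hc : ∀ i j a, S a → D i (D j a) = D j (D i a))
    (m : Fin n →₀ ℕ) (j : Fin n) (l : List (Fin n)) (hl : l.Nodup) (a : A) (ha : S a) :
    S (List.foldr (fun i g => (D i)^[m i] g) a l) ∧
    D j (List.foldr (fun i g => (D i)^[m i] g) a l)
      = List.foldr (fun i g => (D i)^[m i] g) (D j a) l ∧
    List.foldr (fun i g => (D i)^[(m + Finsupp.single j 1 : Fin n →₀ ℕ) i] g) a l =
      if j ∈ l then List.foldr (fun i g => (D i)^[m i] g) (D j a) l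
      else List.foldr (fun i g => (D i)^[m i] g) a l := by
  have hit : ∀ (i : Fin n) (k : ℕ) (a : A), S a →
      S ((D i)^[k] a) ∧ D j ((D i)^[k] a) = (D i)^[k] (D j a) := by
    intro i k
    induction k with
    | zero => intro a h; exact ⟨h, rfl⟩
    | succ k ih =>
      intro a h
      rw [Function.iterate_succ_apply, Function.iterate_succ_apply]
      refine ⟨(ih _ (hS i a h)).1, ?_⟩
      rw [(ih _ (hS i a h)).2, hc j i a h]
  induction l with
  | nil => simp [ha]
  | cons i l ih =>
    obtain ⟨hil, hl'⟩ := List.nodup_cons.1 hl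
    obtain ⟨h1, h2, h3⟩ := ih hl'
    simp only [List.foldr_cons]
    refine ⟨(hit i _ _ h1).1, ?_, ?_⟩
    · rw [(hit i _ _ h1).2, h2]
    · rw [h3]
      by_cases hij : j = i
      · subst hij
        simp only [hil, if_false, List.mem_cons, true_or, if_true, Finsupp.add_apply,
          Finsupp.single_eq_same]
        rw [Function.iterate_succ_apply, (h2)]
      · have : (m + Finsupp.single j 1 : Fin n →₀ ℕ) i = m i := by
          simp [Finsupp.single_apply, hij]
        rw [this]
        simp only [List.mem_cons, hij, false_or]
        split_ifs <;> rfl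

abbrev Sm {n : ℕ} (f : (Fin n → ℝ) → ℝ) : Prop := ContDiff ℝ (⊤ : ℕ∞) f

lemma sm_pderiv {n : ℕ} (i : Fin n) (f : (Fin n → ℝ) → ℝ) (hf : Sm f) : Sm (pderivFun i f) := by
  unfold pderivFun
  exact (hf.fderiv_right (m := (⊤ : ℕ∞)) (by norm_cast)).clm_apply contDiff_const

lemma pderiv_comm' {n : ℕ} (i j : Fin n) (f : (Fin n → ℝ) → ℝ) (hf : Sm f) :
    pderivFun i (pderivFun j f) = pderivFun j (pderivFun i f) := by
  have hd : Differentiable ℝ (fderiv ℝ f) :=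
    (hf.fderiv_right (m := (⊤ : ℕ∞)) (by norm_cast)).differentiable (by simp)
  have key : ∀ (u v : Fin n → ℝ) x,
      fderiv ℝ (fun y => fderiv ℝ f y v) x u = fderiv ℝ (fderiv ℝ f) x u v := by
    intro u v x
    rw [fderiv_clm_apply (hd x) (differentiableAt_const v)]
    simp
  funext x
  change fderiv ℝ (fun y => fderiv ℝ f y (Pi.single j 1)) x (Pi.single i 1)
    = fderiv ℝ (fun y => fderiv ℝ f y (Pi.single i 1)) x (Pi.single j 1)
  rw [key, key]
  have hs : IsSymmSndFDerivAt ℝ f x :=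
    (hf.contDiffAt).isSymmSndFDerivAt (by simp; norm_cast)
  exact hs _ _

lemma multi_shift {n : ℕ} (m : Fin n →₀ ℕ) (i : Fin n) (f : (Fin n → ℝ) → ℝ) (hf : Sm f) :
    multiDerivFun (m + Finsupp.single i 1) f = multiDerivFun m (pderivFun i f) := by
  have := (foldr_shift (pderivFun (n := n)) Sm sm_pderiv pderiv_comm' m i (List.finRange n)
    (List.nodup_finRange n) f hf).2.2
  rw [if_pos (List.mem_finRange i)] at this
  exact this

lemma poly_shift {n : ℕ} (m : Fin n →₀ ℕ) (i : Fin n) (p : MvPolynomial (Fin n) ℝ) :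
    polyMultiDeriv (m + Finsupp.single i 1) p = polyMultiDeriv m (pderiv i p) := by
  have := (foldr_shift (fun i (r : MvPolynomial (Fin n) ℝ) => pderiv i r) (fun _ => True)
    (fun _ _ _ => trivial) (fun i j a _ => by
      have h : ⁅(pderiv i : Derivation ℝ (MvPolynomial (Fin n) ℝ) (MvPolynomial (Fin n) ℝ)),
          (pderiv j : Derivation ℝ (MvPolynomial (Fin n) ℝ) (MvPolynomial (Fin n) ℝ))⁆ = 0 := by
        ext k : 1
        simp [Derivation.commutator_apply, pderiv_X, Pi.single_apply, apply_ite]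
      have := congrArg (fun d => d a) h
      simpa [Derivation.commutator_apply, sub_eq_zero] using this) m i (List.finRange n)
    (List.nodup_finRange n) p trivial).2.2
  rw [if_pos (List.mem_finRange i)] at this
  exact this

lemma W_pderiv {n : ℕ} (i : Fin n) (p : MvPolynomial (Fin n) ℝ) :
    Wspace (pderiv i p) ≤ Wspace p := by
  unfold Wspace
  rw [Submodule.span_le]
  rintro _ ⟨m, rfl⟩
  exact Submodule.subset_span ⟨m + Finsupp.single i 1, poly_shift m i p⟩

lemma foldr_zero {n : ℕ} {A : Type*} (D : Fin n → A → A) (a : A) (l : List (Fin n)) :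
    List.foldr (fun i g => (D i)^[(0 : Fin n →₀ ℕ) i] g) a l = a := by
  induction l with
  | nil => rfl
  | cons i l ih => simp

lemma mem_W {n : ℕ} (p : MvPolynomial (Fin n) ℝ) : p ∈ Wspace p :=
  Submodule.subset_span ⟨0, foldr_zero (fun i (r : MvPolynomial (Fin n) ℝ) => pderiv i r) p _⟩

/-- The jet functional. -/
def jet {n : ℕ} (f : (Fin n → ℝ) → ℝ) (x : Fin n → ℝ) : MvPolynomial (Fin n) ℝ →ₗ[ℝ] ℝ :=
  (MvPolynomial.basisMonomials (Fin n) ℝ).constr ℝ (fun m => multiDerivFun m f x)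

lemma jet_monomial {n : ℕ} (f : (Fin n → ℝ) → ℝ) (x : Fin n → ℝ) (m : Fin n →₀ ℕ) (c : ℝ) :
    jet f x (monomial m c) = c * multiDerivFun m f x := by
  have h : (monomial m c : MvPolynomial (Fin n) ℝ)
      = c • (MvPolynomial.basisMonomials (Fin n) ℝ) m := by
    simp [smul_monomial]
  rw [h, map_smul, jet, Module.Basis.constr_basis, smul_eq_mul]

lemma polDeriv_eq {n : ℕ} (p : MvPolynomial (Fin n) ℝ) (f : (Fin n → ℝ) → ℝ) (x : Fin n → ℝ) :
    polDeriv p f x = jet f x p := by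
  conv_rhs => rw [p.as_sum, map_sum]
  simp [polDeriv, jet_monomial]

lemma jet_C {n : ℕ} (f : (Fin n → ℝ) → ℝ) (x : Fin n → ℝ) (c : ℝ) :
    jet f x (C c) = c * f x := by
  rw [C_apply, jet_monomial, multiDerivFun, foldr_zero]

lemma jet_mul_X {n : ℕ} (f : (Fin n → ℝ) → ℝ) (hf : Sm f) (x : Fin n → ℝ) (i : Fin n)
    (p : MvPolynomial (Fin n) ℝ) : jet f x (p * X i) = jet (pderivFun i f) x p := by
  induction p using MvPolynomial.induction_on' with
  | monomial m c =>
    rw [X, monomial_mul, mul_one, jet_monomial, jet_monomial, multi_shift _ _ _ hf]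
  | add p q hp hq => rw [add_mul, map_add, map_add, hp, hq]

lemma jet_add {n : ℕ} (p : MvPolynomial (Fin n) ℝ) (x : Fin n → ℝ) :
    ∀ (f g : (Fin n → ℝ) → ℝ) (_ : Sm f) (_ : Sm g),
      jet (fun y => f y + g y) x p = jet f x p + jet g x p := by
  induction p using MvPolynomial.induction_on with
  | C c => intro f g _ _; simp only [jet_C]; ring
  | add p q hp hq => intro f g hf hg; simp only [map_add, hp f g hf hg, hq f g hf hg]; ring
  | mul_X p i hp =>
    intro f g hf hg
    rw [jet_mul_X _ (hf.add hg), jet_mul_X _ hf, jet_mul_X _ hg,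
      ← hp _ _ (sm_pderiv i f hf) (sm_pderiv i g hg)]
    congr 2
    funext y
    simp only [pderivFun]
    rw [fderiv_fun_add (hf.differentiable (by simp) y) (hg.differentiable (by simp) y)]
    rfl

open TensorProduct

/-- Comultiplication. -/
def comul' (n : ℕ) : MvPolynomial (Fin n) ℝ →ₐ[ℝ]
    MvPolynomial (Fin n) ℝ ⊗[ℝ] MvPolynomial (Fin n) ℝ :=
  aeval (fun i => X i ⊗ₜ 1 + 1 ⊗ₜ X i)

/-- Partial pairing with a functional. -/
def Rop {n : ℕ} (l : MvPolynomial (Fin n) ℝ →ₗ[ℝ] ℝ) :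
    MvPolynomial (Fin n) ℝ →ₗ[ℝ] MvPolynomial (Fin n) ℝ :=
  (TensorProduct.lid ℝ _).toLinearMap ∘ₗ (l.rTensor _) ∘ₗ (comul' n).toLinearMap

/-- Shift of a functional. -/
def sh {n : ℕ} (i : Fin n) (l : MvPolynomial (Fin n) ℝ →ₗ[ℝ] ℝ) :
    MvPolynomial (Fin n) ℝ →ₗ[ℝ] ℝ := l ∘ₗ LinearMap.mulRight ℝ (X i)

lemma sh_apply {n : ℕ} (i : Fin n) (l : MvPolynomial (Fin n) ℝ →ₗ[ℝ] ℝ)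
    (p : MvPolynomial (Fin n) ℝ) : sh i l p = l (p * X i) := rfl

lemma Rop_C {n : ℕ} (l : MvPolynomial (Fin n) ℝ →ₗ[ℝ] ℝ) (c : ℝ) :
    Rop l (C c) = C (l (C c)) := by
  have h : (comul' n) (C c) = (C c) ⊗ₜ 1 := by
    rw [← algebraMap_eq, AlgHom.commutes]; rfl
  simp [Rop, h, smul_eq_C_mul]

lemma Rop_mul_X {n : ℕ} (l : MvPolynomial (Fin n) ℝ →ₗ[ℝ] ℝ) (p : MvPolynomial (Fin n) ℝ)
    (i : Fin n) : Rop l (p * X i) = Rop (sh i l) p + Rop l p * X i := by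
  have h : (comul' n) (p * X i) = comul' n p * (X i ⊗ₜ 1 + 1 ⊗ₜ X i) := by
    simp [comul']
  simp only [Rop, LinearMap.comp_apply, AlgHom.toLinearMap_apply, h]
  generalize comul' n p = t
  induction t using TensorProduct.induction_on with
  | zero => simp
  | tmul a b => simp [mul_add, sh_apply]
  | add a b ha hb => simp only [add_mul, map_add, ha, hb]; abel

lemma Rop_pderiv {n : ℕ} (j : Fin n) (p : MvPolynomial (Fin n) ℝ) :
    ∀ l, pderiv j (Rop l p) = Rop l (pderiv j p) := by
  induction p using MvPolynomial.induction_on with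
  | C c => intro l; simp [Rop_C]
  | add p q hp hq => intro l; simp only [map_add, hp, hq]
  | mul_X p i hp =>
    intro l
    by_cases hij : i = j
    · subst hij
      simp only [Rop_mul_X, map_add, hp, pderiv_mul, pderiv_X_self, mul_one]
      abel
    · simp only [Rop_mul_X, map_add, hp, pderiv_mul, pderiv_X_of_ne hij, mul_zero, add_zero]

lemma Rop_const {n : ℕ} (p : MvPolynomial (Fin n) ℝ) :
    ∀ l, constantCoeff (Rop l p) = l p := by
  induction p using MvPolynomial.induction_on with
  | C c => intro l; simp [Rop_C]
  | add p q hp hq => intro l; simp only [map_add, hp, hq]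
  | mul_X p i hp => intro l; simp [Rop_mul_X, hp, sh_apply]

lemma coeff_shift {n : ℕ} (i : Fin n) (m : Fin n →₀ ℕ) (p : MvPolynomial (Fin n) ℝ) :
    coeff m (pderiv i p) = coeff (m + Finsupp.single i 1) p * (m i + 1) := by
  induction p using MvPolynomial.induction_on' with
  | monomial k c =>
    rw [pderiv_monomial, coeff_monomial, coeff_monomial]
    by_cases h : k = m + Finsupp.single i 1
    · subst h; simp
    · rw [if_neg h]
      by_cases h2 : k i = 0
      · simp [h2]
      · rw [if_neg]
        · simp
        · rintro rfl
          apply h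
          ext a
          by_cases ha : a = i
          · subst ha; simp; omega
          · simp [Finsupp.single_apply, Ne.symm ha]
  | add p q hp hq => simp only [map_add, coeff_add, hp, hq]; ring

lemma Rop_zero {n : ℕ} (l : MvPolynomial (Fin n) ℝ →ₗ[ℝ] ℝ) (m : Fin n →₀ ℕ) :
    ∀ p, (∀ q ∈ Wspace p, l q = 0) → coeff m (Rop l p) = 0 := by
  induction hk : m.degree generalizing m with
  | zero =>
    intro p hp
    have : m = 0 := (Finsupp.degree_eq_zero_iff m).1 hk
    subst this
    exact (Rop_const p l).trans (hp p (mem_W p))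
  | succ k ih =>
    intro p hp
    have hm : m ≠ 0 := by rintro rfl; simp at hk
    obtain ⟨i, hi⟩ := Finsupp.ne_iff.1 hm
    have hi : m i ≠ 0 := hi
    have hmm : m = (m - Finsupp.single i 1) + Finsupp.single i 1 := by
      ext a
      by_cases ha : a = i
      · subst ha; simp; omega
      · simp [Finsupp.single_apply, Ne.symm ha]
    generalize m - Finsupp.single i 1 = m' at hmm
    subst hmm
    have := ih m' (by simpa using hk) (pderiv i p) (fun q hq => hp q (W_pderiv i p hq))
    rw [← Rop_pderiv, coeff_shift] at this
    refine (mul_eq_zero.1 this).resolve_right (by positivity)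

lemma B_symm {n : ℕ} (p : MvPolynomial (Fin n) ℝ) :
    ∀ l g : MvPolynomial (Fin n) ℝ →ₗ[ℝ] ℝ, g (Rop l p) = l (Rop g p) := by
  have hC : ∀ (l : MvPolynomial (Fin n) ℝ →ₗ[ℝ] ℝ) (c : ℝ), l (C c) = c * l 1 := by
    intro l c
    rw [← mul_one (C c), ← smul_eq_C_mul, map_smul, smul_eq_mul]
  induction p using MvPolynomial.induction_on with
  | C c =>
    intro l g
    rw [Rop_C, Rop_C, hC g, hC l (g _), hC l, hC g]; ring
  | add p q hp hq => intro l g; simp only [map_add, hp l g, hq l g]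
  | mul_X p i hp =>
    intro l g
    rw [Rop_mul_X, Rop_mul_X, map_add, map_add, ← sh_apply, ← sh_apply, hp, hp l, add_comm]

lemma jet_leibniz {n : ℕ} (p : MvPolynomial (Fin n) ℝ) (x : Fin n → ℝ) :
    ∀ (f g : (Fin n → ℝ) → ℝ) (_ : Sm f) (_ : Sm g),
      jet (fun y => f y * g y) x p = jet g x (Rop (jet f x) p) := by
  induction p using MvPolynomial.induction_on with
  | C c => intro f g _ _; simp only [Rop_C, jet_C]; ring
  | add p q hp hq => intro f g hf hg; simp only [map_add, hp f g hf hg, hq f g hf hg]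
  | mul_X p i hp =>
    intro f g hf hg
    have hsf : sh i (jet f x) = jet (pderivFun i f) x := by
      exact LinearMap.ext fun q => jet_mul_X f hf x i q
    rw [jet_mul_X _ (hf.mul hg), Rop_mul_X, map_add, jet_mul_X _ hg, hsf,
      ← hp _ _ (sm_pderiv i f hf) hg, ← hp _ _ hf (sm_pderiv i g hg),
      ← jet_add _ _ _ _ ((sm_pderiv i f hf).mul hg) (hf.mul (sm_pderiv i g hg))]
    congr 2
    funext y
    simp only [pderivFun]
    rw [fderiv_fun_mul (hf.differentiable (by simp) y) (hg.differentiable (by simp) y)]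
    simp
    ring

lemma Rop_congr {n : ℕ} (p : MvPolynomial (Fin n) ℝ) (l l' : MvPolynomial (Fin n) ℝ →ₗ[ℝ] ℝ)
    (h : ∀ q ∈ Wspace p, l q = l' q) : Rop l p = Rop l' p := by
  have h0 : Rop (l - l') p = 0 := by
    ext m
    rw [coeff_zero]
    exact Rop_zero _ m p (fun q hq => by simp [h q hq])
  have h1 : Rop (l - l') p = Rop l p - Rop l' p := by
    simp [Rop, LinearMap.rTensor_sub]
  exact sub_eq_zero.1 (h1 ▸ h0)

lemma sm_eval {n : ℕ} (q : MvPolynomial (Fin n) ℝ) : Sm (fun x => eval x q) := by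
  induction q using MvPolynomial.induction_on with
  | C c => simpa using contDiff_const
  | add p q hp hq => simpa using hp.add hq
  | mul_X p i hp => simpa using hp.mul (contDiff_apply ℝ ℝ i)

/-- Generalized Leibniz formula, second form. -/
theorem generalized_leibniz_second_form
    (n : ℕ) (hn : 1 ≤ n) (p : MvPolynomial (Fin n) ℝ)
    (ρ : ℕ) (hρ : ρ = Module.finrank ℝ (Wspace p))
    (b : Fin ρ → MvPolynomial (Fin n) ℝ)
    (hbmem : ∀ j, b j ∈ Wspace p)
    (hbspan : Wspace p ≤ Submodule.span ℝ (Set.range b))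
    (hborth : ∀ i j, fischer (b i) (b j) = if i = j then 1 else 0)
    (f g : (Fin n → ℝ) → ℝ) (hf : ContDiff ℝ (⊤ : ℕ∞) f) (hg : ContDiff ℝ (⊤ : ℕ∞) g)
    (x : Fin n → ℝ) :
    polDeriv p (fun y => f y * g y) x
      = ∑ i : Fin ρ, ∑ j : Fin ρ,
          fischer p (b i * b j) * (polDeriv (b i) f x * polDeriv (b j) g x) := by
  have key : ∀ l : MvPolynomial (Fin n) ℝ →ₗ[ℝ] ℝ, ∀ q ∈ Wspace p,
      l q = (∑ i, l (b i) • jet (fun y => eval y (b i)) 0) q := by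
    intro l q hq
    refine LinearMap.eqOn_span (s := Set.range b) ?_ (hbspan hq)
    rintro _ ⟨j, rfl⟩
    have ho : ∀ i, jet (fun y => eval y (b i)) 0 (b j) = if j = i then 1 else 0 := by
      intro i
      rw [← polDeriv_eq]; exact hborth j i
    simp [ho]
  have hR : ∀ l : MvPolynomial (Fin n) ℝ →ₗ[ℝ] ℝ, ∀ G : MvPolynomial (Fin n) ℝ →ₗ[ℝ] ℝ,
      G (Rop l p) = ∑ i, l (b i) * G (Rop (jet (fun y => eval y (b i)) 0) p) := by
    intro l G
    rw [Rop_congr p _ _ (key l), B_symm]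
    simp only [LinearMap.sum_apply, LinearMap.smul_apply, smul_eq_mul]
    exact Finset.sum_congr rfl fun i _ => by rw [B_symm]
  rw [polDeriv_eq, jet_leibniz p x f g hf hg, hR]
  refine Finset.sum_congr rfl fun i _ => ?_
  rw [B_symm, hR, Finset.mul_sum]
  refine Finset.sum_congr rfl fun j _ => ?_
  have hfi : fischer p (b i * b j)
      = jet (fun y => eval y (b j)) 0 (Rop (jet (fun y => eval y (b i)) 0) p) := by
    rw [← jet_leibniz _ _ _ _ (sm_eval _) (sm_eval _), fischer, polDeriv_eq]
    simp only [map_mul]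
  rw [hfi, polDeriv_eq, polDeriv_eq, B_symm]
  ring
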